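/- arXiv:1701.08060 — 2 statements merged into one kernel-verified Lean document; each statement's English description precedes it below -/
import Mathlib

section
/- Let H be a bipartite simple graph with finitely many edges such that every support vertex of H has degree at least 3. If a graph H' can be obtained from H by a finite sequence of operations (I), (II), (III), (I'), (II'), (III'), then H' can be obtained from H by a finite sequence using only the operations (I), (II), (III). -/
open SimpleGraph

/-- Operation (I): add a pendant edge joining a support vertex `v` of `H`
to an isolated vertex `w` of `H`. -/
def OpI (H H' : SimpleGraph ℕ) : Prop :=
  ∃ v w : ℕ, v ∈ H.support ∧ w ∉ H.support ∧ H' = H ⊔ edge v w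

/-- Operation (II): subdivide an edge `uv` of `H` using two distinct isolated
vertices `p, q` of `H`, i.e. delete `uv` and add the edges `up`, `pq`, `qv`. -/
def OpII (H H' : SimpleGraph ℕ) : Prop :=
  ∃ u v p q : ℕ, H.Adj u v ∧ p ∉ H.support ∧ q ∉ H.support ∧ p ≠ q ∧
    H' = H.deleteEdges {s(u, v)} ⊔ edge u p ⊔ edge p q ⊔ edge q v

/-- Operation (III): for vertices `x, y` of `H` that are non-adjacent and have a
common neighbor `z`, add a new isolated vertex `w` of `H` together with the
edges `xw` and `wy`. -/
def OpIII (H H' : SimpleGraph ℕ) : Prop :=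
  ∃ x y z w : ℕ, x ≠ y ∧ ¬ H.Adj x y ∧ H.Adj x z ∧ H.Adj y z ∧ w ∉ H.support ∧
    H' = H ⊔ edge x w ⊔ edge w y

/-- One of the forward operations (I), (II), (III). -/
def OpFwd (H H' : SimpleGraph ℕ) : Prop := OpI H H' ∨ OpII H H' ∨ OpIII H H'

/-- One of the six operations (I), (II), (III), (I'), (II'), (III'):
the inverse operations are those whose inverse is a forward operation. -/
def OpAny (H H' : SimpleGraph ℕ) : Prop := OpFwd H H' ∨ OpFwd H' H

def gdel (G : SimpleGraph ℕ) (w : ℕ) : SimpleGraph ℕ where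
  Adj a b := G.Adj a b ∧ a ≠ w ∧ b ≠ w
  symm := ⟨fun _ _ h => ⟨h.1.symm, h.2.2, h.2.1⟩⟩
  loopless := ⟨fun a h => G.loopless.irrefl a h.1⟩

def gcon (G : SimpleGraph ℕ) (u p q v : ℕ) : SimpleGraph ℕ where
  Adj a b := (G.Adj a b ∧ a ≠ p ∧ a ≠ q ∧ b ≠ p ∧ b ≠ q) ∨
    (a ≠ b ∧ ((a = u ∧ b = v) ∨ (a = v ∧ b = u)))
  symm := ⟨fun a b h => by have := G.adj_comm a b; tauto⟩
  loopless := ⟨fun a h => by have := G.loopless.irrefl a; tauto⟩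

def gsw (a b : ℕ) (G : SimpleGraph ℕ) : SimpleGraph ℕ where
  Adj c d := G.Adj (Equiv.swap a b c) (Equiv.swap a b d)
  symm := ⟨fun _ _ h => SimpleGraph.Adj.symm h⟩
  loopless := ⟨fun c h => G.loopless.irrefl _ h⟩

theorem gdel_adj (G : SimpleGraph ℕ) (w a b : ℕ) :
    (gdel G w).Adj a b ↔ G.Adj a b ∧ a ≠ w ∧ b ≠ w := Iff.rfl

theorem gcon_adj (G : SimpleGraph ℕ) (u p q v a b : ℕ) :
    (gcon G u p q v).Adj a b ↔ (G.Adj a b ∧ a ≠ p ∧ a ≠ q ∧ b ≠ p ∧ b ≠ q) ∨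
    (a ≠ b ∧ ((a = u ∧ b = v) ∨ (a = v ∧ b = u))) := Iff.rfl

theorem gsw_adj (G : SimpleGraph ℕ) (a b c d : ℕ) :
    (gsw a b G).Adj c d ↔ G.Adj (Equiv.swap a b c) (Equiv.swap a b d) := Iff.rfl

structure RA (G : SimpleGraph ℕ) (x y z w : ℕ) : Prop where
  nb : ∀ a, G.Adj w a ↔ a = x ∨ a = y
  nb2 : ∀ a, G.Adj a w ↔ a = x ∨ a = y
  xz : G.Adj x z
  yz : G.Adj y z
  ne : z ≠ w

structure RB (G : SimpleGraph ℕ) (u p q v : ℕ) : Prop where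
  np : ∀ a, G.Adj p a ↔ a = u ∨ a = q
  np2 : ∀ a, G.Adj a p ↔ a = u ∨ a = q
  nq : ∀ a, G.Adj q a ↔ a = p ∨ a = v
  nq2 : ∀ a, G.Adj a q ↔ a = p ∨ a = v
  nuv : ¬ G.Adj u v
  nvu : ¬ G.Adj v u
  up : u ≠ p
  uq : u ≠ q
  uv : u ≠ v
  pq : p ≠ q
  pv : p ≠ v
  qv : q ≠ v

theorem RA.gr {G x y z w} (h : RA G x y z w) : G.Adj w x ∧ G.Adj w y ∧ G.Adj x w ∧ G.Adj y w :=
  ⟨(h.nb _).2 (Or.inl rfl), (h.nb _).2 (Or.inr rfl), (h.nb2 _).2 (Or.inl rfl),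
    (h.nb2 _).2 (Or.inr rfl)⟩

theorem RB.gr {G u p q v} (h : RB G u p q v) : G.Adj p u ∧ G.Adj u p ∧ G.Adj p q ∧ G.Adj q p ∧
    G.Adj q v ∧ G.Adj v q :=
  ⟨(h.np _).2 (Or.inl rfl), (h.np2 _).2 (Or.inl rfl), (h.np _).2 (Or.inr rfl),
    (h.np2 _).2 (Or.inr rfl), (h.nq _).2 (Or.inr rfl), (h.nq2 _).2 (Or.inr rfl)⟩

theorem RA.sy {G x y z w} (h : RA G x y z w) : RA G y x z w := by
  obtain ⟨a, b, c, d, e⟩ := h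
  exact ⟨fun t => by rw [a, or_comm], fun t => by rw [b, or_comm], d, c, e⟩

theorem RB.sy {G u p q v} (h : RB G u p q v) : RB G v q p u := by
  obtain ⟨a, b, c, d, e, e', f1, f2, f3, f4, f5, f6⟩ := h
  exact ⟨fun t => by rw [c, or_comm], fun t => by rw [d, or_comm],
    fun t => by rw [a, or_comm], fun t => by rw [b, or_comm], e', e,
    f6.symm, f5.symm, f3.symm, f4.symm, f2.symm, f1.symm⟩

theorem gcon_sy (G : SimpleGraph ℕ) (u p q v : ℕ) : gcon G v q p u = gcon G u p q v := by
  ext a b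
  simp only [gcon_adj]; tauto

def Red (G G' : SimpleGraph ℕ) : Prop :=
  (∃ x y z w, RA G x y z w ∧ G' = gdel G w) ∨ (∃ u p q v, RB G u p q v ∧ G' = gcon G u p q v)

def SmallV (G : SimpleGraph ℕ) (v : ℕ) : Prop := ∃ x y, ∀ a, G.Adj v a → a = x ∨ a = y

def Bip (G : SimpleGraph ℕ) : Prop := ∃ c : ℕ → Bool, ∀ a b, G.Adj a b → c a ≠ c b

theorem RA.red {G x y z w} (h : RA G x y z w) : Red G (gdel G w) := Or.inl ⟨x, y, z, w, h, rfl⟩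
theorem RB.red {G u p q v} (h : RB G u p q v) : Red G (gcon G u p q v) :=
  Or.inr ⟨u, p, q, v, h, rfl⟩

theorem red_of_fwd {G G' : SimpleGraph ℕ} (h : OpFwd G' G) : Red G G' := by
  rcases h with ⟨v, w, hv, hw, rfl⟩ | ⟨u, v, p, q, huv, hp, hq, hpq, rfl⟩ |
    ⟨x, y, z, w, hxy, hn, hxz, hyz, hw, rfl⟩
  · obtain ⟨z, hz⟩ := hv
    have hw1 : ∀ a, ¬ G'.Adj w a := fun a ha => hw ⟨a, ha⟩
    have hw2 : ∀ a, ¬ G'.Adj a w := fun a ha => hw ⟨a, ha.symm⟩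
    refine Or.inl ⟨v, v, z, w, ⟨?_, ?_, ?_, ?_, ?_⟩, ?_⟩
    · intro a; simp only [sup_adj, edge_adj]; grind
    · intro a; simp only [sup_adj, edge_adj]; grind
    · simp only [sup_adj, edge_adj]; grind
    · simp only [sup_adj, edge_adj]; grind
    · rintro rfl; exact hw2 _ hz
    · ext a b; simp only [gdel_adj, sup_adj, edge_adj]; grind
  · have hp1 : ∀ a, ¬ G'.Adj p a := fun a ha => hp ⟨a, ha⟩
    have hp2 : ∀ a, ¬ G'.Adj a p := fun a ha => hp ⟨a, ha.symm⟩
    have hq1 : ∀ a, ¬ G'.Adj q a := fun a ha => hq ⟨a, ha⟩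
    have hq2 : ∀ a, ¬ G'.Adj a q := fun a ha => hq ⟨a, ha.symm⟩
    have h1 := huv.ne
    have h2 : p ≠ u := by rintro rfl; exact hp1 _ huv
    have h3 : p ≠ v := by rintro rfl; exact hp2 _ huv
    have h4 : q ≠ u := by rintro rfl; exact hq1 _ huv
    have h5 : q ≠ v := by rintro rfl; exact hq2 _ huv
    have h6 := huv.symm
    refine Or.inr ⟨u, p, q, v, ⟨?_, ?_, ?_, ?_, ?_, ?_, h2.symm, h4.symm, h1, hpq, h3, h5⟩, ?_⟩
    · intro a; simp only [sup_adj, edge_adj, deleteEdges_adj, Set.mem_singleton_iff, Sym2.eq_iff]; grind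
    · intro a; simp only [sup_adj, edge_adj, deleteEdges_adj, Set.mem_singleton_iff, Sym2.eq_iff]; grind
    · intro a; simp only [sup_adj, edge_adj, deleteEdges_adj, Set.mem_singleton_iff, Sym2.eq_iff]; grind
    · intro a; simp only [sup_adj, edge_adj, deleteEdges_adj, Set.mem_singleton_iff, Sym2.eq_iff]; grind
    · simp only [sup_adj, edge_adj, deleteEdges_adj, Set.mem_singleton_iff, Sym2.eq_iff]; grind
    · simp only [sup_adj, edge_adj, deleteEdges_adj, Set.mem_singleton_iff, Sym2.eq_iff]; grind
    · ext a b
      simp only [gcon_adj, sup_adj, edge_adj, deleteEdges_adj, Set.mem_singleton_iff, Sym2.eq_iff]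
      have : G'.Adj a b → a ≠ b := fun h => h.ne
      grind
  · have hw1 : ∀ a, ¬ G'.Adj w a := fun a ha => hw ⟨a, ha⟩
    have hw2 : ∀ a, ¬ G'.Adj a w := fun a ha => hw ⟨a, ha.symm⟩
    refine Or.inl ⟨x, y, z, w, ⟨?_, ?_, ?_, ?_, ?_⟩, ?_⟩
    · intro a; simp only [sup_adj, edge_adj]; grind
    · intro a; simp only [sup_adj, edge_adj]; grind
    · simp only [sup_adj, edge_adj]; grind
    · simp only [sup_adj, edge_adj]; grind
    · rintro rfl; exact hw2 _ hxz
    · ext a b; simp only [gdel_adj, sup_adj, edge_adj]; grind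

theorem fwd_of_red {G G' : SimpleGraph ℕ} (hb : Bip G') (h : Red G G') : OpFwd G' G := by
  rcases h with ⟨x, y, z, w, ⟨nb, nb2, xz, yz, ne⟩, rfl⟩ |
    ⟨u, p, q, v, ⟨np, np2, nq, nq2, nuv, nvu, up, uq, uv, pq, pv, qv⟩, rfl⟩
  · have hx : x ≠ w := by rintro rfl; exact G.loopless.irrefl x ((nb x).2 (Or.inl rfl))
    have hy : y ≠ w := by rintro rfl; exact G.loopless.irrefl y ((nb y).2 (Or.inr rfl))
    have hw : w ∉ (gdel G w).support := by rintro ⟨a, ha⟩; exact ha.2.1 rfl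
    by_cases hxy : x = y
    · subst hxy
      refine Or.inl ⟨x, w, ⟨z, xz, hx, ne⟩, hw, ?_⟩
      ext a b; simp only [gdel_adj, sup_adj, edge_adj]; grind
    · refine Or.inr (Or.inr ⟨x, y, z, w, hxy, ?_, ⟨xz, hx, ne⟩, ⟨yz, hy, ne⟩, hw, ?_⟩)
      · intro h
        obtain ⟨c, hc⟩ := hb
        have h1 := hc _ _ h
        have h2 := hc x z ⟨xz, hx, ne⟩
        have h3 := hc y z ⟨yz, hy, ne⟩
        revert h1 h2 h3
        cases c x <;> cases c y <;> cases c z <;> simp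
      · ext a b; simp only [gdel_adj, sup_adj, edge_adj]; grind
  · refine Or.inr (Or.inl ⟨u, v, p, q, ?_, ?_, ?_, pq, ?_⟩)
    · simp only [gcon_adj]; grind
    · rintro ⟨a, ha⟩; simp only [gcon_adj] at ha; grind
    · rintro ⟨a, ha⟩; simp only [gcon_adj] at ha; grind
    · ext a b
      simp only [gcon_adj, sup_adj, edge_adj, deleteEdges_adj, Set.mem_singleton_iff, Sym2.eq_iff]
      have : G.Adj a b → a ≠ b := fun h => h.ne
      grind

theorem red_supp {G G' : SimpleGraph ℕ} (h : Red G G') : G'.support ⊂ G.support := by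
  rcases h with ⟨x, y, z, w, ⟨nb, nb2, xz, yz, ne⟩, rfl⟩ |
    ⟨u, p, q, v, ⟨np, np2, nq, nq2, nuv, nvu, up, uq, uv, pq, pv, qv⟩, rfl⟩
  · refine ⟨fun a ⟨b, hb⟩ => ⟨b, hb.1⟩, fun hs => ?_⟩
    obtain ⟨b, hb⟩ := hs (show w ∈ G.support from ⟨x, (nb x).2 (Or.inl rfl)⟩)
    exact hb.2.1 rfl
  · refine ⟨fun a ⟨b, hb⟩ => ?_, fun hs => ?_⟩
    · rcases hb with hb | ⟨_, ⟨rfl, rfl⟩ | ⟨rfl, rfl⟩⟩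
      · exact ⟨b, hb.1⟩
      · exact ⟨p, (np2 _).2 (Or.inl rfl)⟩
      · exact ⟨q, (nq2 _).2 (Or.inr rfl)⟩
    · obtain ⟨b, hb⟩ := hs (show p ∈ G.support from ⟨u, (np u).2 (Or.inl rfl)⟩)
      simp only [gcon_adj] at hb; grind

theorem small_of_red {G G' : SimpleGraph ℕ} (h : Red G G') (t : ℕ) (ht : SmallV G t) :
    SmallV G' t := by
  obtain ⟨x0, y0, hs⟩ := ht
  rcases h with ⟨x, y, z, w, ⟨nb, nb2, xz, yz, ne⟩, rfl⟩ |
    ⟨u, p, q, v, ⟨np, np2, nq, nq2, nuv, nvu, up, uq, uv, pq, pv, qv⟩, rfl⟩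
  · exact ⟨x0, y0, fun a ha => hs a ha.1⟩
  · by_cases h1 : t = u
    · subst h1
      have := hs p
      refine ⟨if x0 = p then v else x0, if y0 = p then v else y0, fun a ha => ?_⟩
      have := hs a
      simp only [gcon_adj] at ha
      grind
    · by_cases h2 : t = v
      · subst h2
        have := hs q
        refine ⟨if x0 = q then u else x0, if y0 = q then u else y0, fun a ha => ?_⟩
        have := hs a
        simp only [gcon_adj] at ha
        grind
      · refine ⟨x0, y0, fun a ha => hs a ?_⟩
        simp only [gcon_adj] at ha
        grind

theorem bip_of_red {G G' : SimpleGraph ℕ} (h : Red G G') (hb : Bip G) : Bip G' := by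
  obtain ⟨c, hc⟩ := hb
  refine ⟨c, ?_⟩
  rcases h with ⟨x, y, z, w, ⟨nb, nb2, xz, yz, ne⟩, rfl⟩ |
    ⟨u, p, q, v, ⟨np, np2, nq, nq2, nuv, nvu, up, uq, uv, pq, pv, qv⟩, rfl⟩
  · exact fun a b h => hc a b h.1
  · have h1 := hc u p ((np2 _).2 (Or.inl rfl))
    have h2 := hc p q ((np _).2 (Or.inr rfl))
    have h3 := hc q v ((nq _).2 (Or.inr rfl))
    have h4 : c u ≠ c v := by
      revert h1 h2 h3
      cases c u <;> cases c p <;> cases c q <;> cases c v <;> simp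
    rintro a b (h | ⟨_, ⟨rfl, rfl⟩ | ⟨rfl, rfl⟩⟩)
    · exact hc a b h.1
    · exact h4
    · exact h4.symm

theorem bip_of_red' {G G' : SimpleGraph ℕ} (h : Red G G') (hb : Bip G') : Bip G := by
  obtain ⟨c, hc⟩ := hb
  rcases h with ⟨x, y, z, w, ⟨nb, nb2, xz, yz, ne⟩, rfl⟩ |
    ⟨u, p, q, v, ⟨np, np2, nq, nq2, nuv, nvu, up, uq, uv, pq, pv, qv⟩, rfl⟩
  · have hx : x ≠ w := by rintro rfl; exact G.loopless.irrefl x ((nb x).2 (Or.inl rfl))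
    have hy : y ≠ w := by rintro rfl; exact G.loopless.irrefl y ((nb y).2 (Or.inr rfl))
    have h1 := hc x z ⟨xz, hx, ne⟩
    have h2 := hc y z ⟨yz, hy, ne⟩
    refine ⟨fun a => if a = w then c z else c a, fun a b h => ?_⟩
    have := hc a b
    simp only [gdel_adj] at this
    have := h.ne
    grind
  · have h0 := hc u v (Or.inr ⟨uv, Or.inl ⟨rfl, rfl⟩⟩)
    refine ⟨fun a => if a = p then c v else if a = q then c u else c a, fun a b h => ?_⟩
    have := hc a b
    simp only [gcon_adj] at this
    have := h.ne
    grind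

theorem red_gsw {G G' : SimpleGraph ℕ} (s t : ℕ) (h : Red G G') :
    Red (gsw s t G) (gsw s t G') := by
  set σ := Equiv.swap s t with hσ
  have hss : ∀ a, σ (σ a) = a := fun a => Equiv.swap_apply_self s t a
  have key : ∀ a b, σ a = b ↔ a = σ b := fun a b =>
    ⟨fun h => by rw [← h, hss], fun h => by rw [h, hss]⟩
  rcases h with ⟨x, y, z, w, ⟨nb, nb2, xz, yz, ne⟩, rfl⟩ |
    ⟨u, p, q, v, ⟨np, np2, nq, nq2, nuv, nvu, up, uq, uv, pq, pv, qv⟩, rfl⟩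
  · refine Or.inl ⟨σ x, σ y, σ z, σ w, ⟨?_, ?_, ?_, ?_, ?_⟩, ?_⟩
    · intro a; rw [gsw_adj, ← hσ, hss, nb, key, key]
    · intro a; rw [gsw_adj, ← hσ, hss, nb2, key, key]
    · rw [gsw_adj, ← hσ, hss, hss]; exact xz
    · rw [gsw_adj, ← hσ, hss, hss]; exact yz
    · simpa using ne
    · ext a b
      simp only [gsw_adj, gdel_adj, ← hσ, ne_eq, key]
  · refine Or.inr ⟨σ u, σ p, σ q, σ v, ⟨?_, ?_, ?_, ?_, ?_, ?_, ?_, ?_, ?_, ?_, ?_, ?_⟩, ?_⟩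
    · intro a; rw [gsw_adj, ← hσ, hss, np, key, key]
    · intro a; rw [gsw_adj, ← hσ, hss, np2, key, key]
    · intro a; rw [gsw_adj, ← hσ, hss, nq, key, key]
    · intro a; rw [gsw_adj, ← hσ, hss, nq2, key, key]
    · rw [gsw_adj, ← hσ, hss, hss]; exact nuv
    · rw [gsw_adj, ← hσ, hss, hss]; exact nvu
    all_goals first | (simpa using up) | (simpa using uq) | (simpa using uv) | (simpa using pq) | (simpa using pv) | (simpa using qv) | skip
    · ext a b
      simp only [gsw_adj, gcon_adj, ← hσ, ne_eq, key, hss]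

theorem bip_gsw {G : SimpleGraph ℕ} (s t : ℕ) (h : Bip G) : Bip (gsw s t G) := by
  obtain ⟨c, hc⟩ := h
  exact ⟨fun a => c (Equiv.swap s t a), fun a b h => hc _ _ h⟩

structure Ctx (G : SimpleGraph ℕ) (P : SimpleGraph ℕ → Prop) : Prop where
  down : ∀ K K', K.support ⊂ G.support → P K → Red K K' → P K'
  up : ∀ K K', P K → Red K' K → P K'
  sw : ∀ K K' a b, SmallV G a → SmallV G b → P K → K' = gsw a b K → P K'

theorem Ctx.j11 {G P} (C : Ctx G P) {G1 G2 K K'} (r1 : Red G G1) (h1 : Red G1 K) (h2 : Red G2 K')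
    (e : K = K') (p : P G1) : P G2 := by
  subst e
  exact C.up _ _ (C.down _ _ (red_supp r1) p h1) h2

theorem RA.small {G x y z w} (h : RA G x y z w) : SmallV G w := ⟨x, y, fun a ha => (h.nb a).1 ha⟩
theorem RB.small {G u p q v} (h : RB G u p q v) : SmallV G p := ⟨u, q, fun a ha => (h.np a).1 ha⟩
theorem RB.small' {G u p q v} (h : RB G u p q v) : SmallV G q := ⟨p, v, fun a ha => (h.nq a).1 ha⟩

/-- If `w ≁ w'` we can delete `w'` after `w` unless the witness is bad. -/
theorem RA.after {G x y z w x' y' z' w'} (h : RA G x y z w) (h' : RA G x' y' z' w')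
    (hne : w ≠ w') (hz : z' ≠ w ∨ z ≠ w') : ∃ x y z, RA (gdel G w) x y z w' := by
  have gra := h.gr
  obtain ⟨nb, nb2, xz, yz, ne⟩ := h
  have gra' := h'.gr
  obtain ⟨nb', nb2', xz', yz', ne'⟩ := h'
  have ac := G.adj_comm
  have ir := G.loopless.irrefl
  by_cases hw : G.Adj w w'
  · refine ⟨z, z, z', ?_, ?_, ?_, ?_, ?_⟩
    all_goals try simp only [gdel_adj]
    all_goals grind
  · by_cases hz' : z' = w
    · refine ⟨x', y', z, ?_, ?_, ?_, ?_, ?_⟩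
      all_goals try simp only [gdel_adj]
      all_goals grind
    · refine ⟨x', y', z', ?_, ?_, ?_, ?_, ?_⟩
      all_goals try simp only [gdel_adj]
      all_goals grind

theorem conf_AA {G P} (C : Ctx G P) {x y z w x' y' z' w'} (h : RA G x y z w)
    (h' : RA G x' y' z' w') (p : P (gdel G w)) : P (gdel G w') := by
  by_cases hne : w = w'
  · rwa [← hne]
  by_cases hz : z' ≠ w ∨ z ≠ w'
  · obtain ⟨a, b, c, h1⟩ := h.after h' hne hz
    obtain ⟨a', b', c', h2⟩ := h'.after h (Ne.symm hne) hz.symm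
    refine C.j11 h.red h1.red h2.red ?_ p
    ext s t; simp only [gdel_adj]; tauto
  · push Not at hz
    obtain ⟨rfl, rfl⟩ := hz
    refine C.sw _ _ z z' h'.small h.small p ?_
    have gra := h.gr
    obtain ⟨nb, nb2, xz, yz, ne⟩ := h
    have gra' := h'.gr
    obtain ⟨nb', nb2', xz', yz', ne'⟩ := h'
    ext s t; simp only [gdel_adj, gsw_adj, Equiv.swap_apply_def]
    have ir := G.loopless.irrefl
    have ac := G.adj_comm
    grind

theorem RA.B_ne {G x y z w u p q v} (h : RA G x y z w) (h' : RB G u p q v) : w ≠ p := by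
  rintro rfl
  have gra := h.gr
  obtain ⟨nb, nb2, xz, yz, ne⟩ := h
  have grb := h'.gr
  obtain ⟨np, np2, nq, nq2, nuv, nvu, up, uq, uv, pq, pv, qv⟩ := h'
  have ac := G.adj_comm
  grind

/-- both directions of the A/B case when `w = u` -/
theorem AB_u {G P} (C : Ctx G P) {x y z u p q v} (h : RA G x y z u) (h' : RB G u p q v) :
    P (gdel G u) ↔ P (gcon G u p q v) := by
  have hs := h.small
  have hs' := h'.small'
  have r1 := h.red
  have gra := h.gr
  obtain ⟨nb, nb2, xz, yz, ne⟩ := h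
  have grb := h'.gr
  obtain ⟨np, np2, nq, nq2, nuv, nvu, up, uq, uv, pq, pv, qv⟩ := h'
  have ac := G.adj_comm
  have ir := G.loopless.irrefl
  have hu : ∀ a, G.Adj u a ↔ a = p := by
    have := nb p
    have : z = q := by grind
    grind
  have hu2 : ∀ a, G.Adj a u ↔ a = p := by grind
  clear nb nb2 xz yz ne
  have r2 : RA (gdel G u) q q v p := by
    refine ⟨?_, ?_, ?_, ?_, ?_⟩
    all_goals try simp only [gdel_adj]
    all_goals grind
  have e1 : gcon G u p q v = gsw u q (gdel (gdel G u) p) := by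
    ext s t; simp only [gdel_adj, gcon_adj, gsw_adj, Equiv.swap_apply_def]
    grind
  have e2 : gdel (gdel G u) p = gsw u q (gcon G u p q v) := by
    rw [e1]; ext s t; simp only [gsw_adj, Equiv.swap_apply_self]
  constructor
  · intro hp
    exact C.sw _ _ u q hs hs' (C.down _ _ (red_supp r1) hp r2.red) e1
  · intro hp
    exact C.up _ _ (C.sw _ _ u q hs hs' hp e2) r2.red

theorem AB {G P} (C : Ctx G P) {x y z w u p q v} (h : RA G x y z w) (h' : RB G u p q v) :
    P (gdel G w) ↔ P (gcon G u p q v) := by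
  have hp := h.B_ne h'
  have hq := h.B_ne h'.sy
  by_cases hu : w = u
  · subst hu; exact AB_u C h h'
  by_cases hv : w = v
  · subst hv; rw [AB_u C h h'.sy, gcon_sy]
  have r1 := h.red
  have r2 := h'.red
  have gra := h.gr
  obtain ⟨nb, nb2, xz, yz, ne⟩ := h
  have grb := h'.gr
  obtain ⟨np, np2, nq, nq2, nuv, nvu, up, uq, uv, pq, pv, qv⟩ := h'
  have ac := G.adj_comm
  have ir := G.loopless.irrefl
  have s1 : RB (gdel G w) u p q v := by
    refine ⟨?_, ?_, ?_, ?_, ?_, ?_, up, uq, uv, pq, pv, qv⟩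
    all_goals try simp only [gdel_adj]
    all_goals grind
  have s2 : ∃ z', RA (gcon G u p q v) x y z' w := by
    by_cases h1 : z = p
    · refine ⟨v, ?_, ?_, ?_, ?_, ?_⟩
      all_goals try simp only [gcon_adj]
      all_goals grind
    · by_cases h2 : z = q
      · refine ⟨u, ?_, ?_, ?_, ?_, ?_⟩
        all_goals try simp only [gcon_adj]
        all_goals grind
      · refine ⟨z, ?_, ?_, ?_, ?_, ?_⟩
        all_goals try simp only [gcon_adj]
        all_goals grind
  obtain ⟨z', s2⟩ := s2
  have e : gcon (gdel G w) u p q v = gdel (gcon G u p q v) w := by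
    ext s t; simp only [gdel_adj, gcon_adj]
    grind
  exact ⟨C.j11 r1 s1.red s2.red e, C.j11 r2 s2.red s1.red e.symm⟩

theorem BB_over {G P} (C : Ctx G P) {u p q v u' q' v'} (h : RB G u p q v) (h' : RB G u' q q' v')
    (hd : q' ≠ p) : P (gcon G u p q v) ↔ P (gcon G u' q q' v') := by
  have hs := h.small
  have hs' := h'.small'
  have ac := G.adj_comm
  have ir := G.loopless.irrefl
  have e1 : gcon G u' q q' v' = gsw p q' (gcon G u p q v) := by
    have grb := h.gr
    obtain ⟨np, np2, nq, nq2, nuv, nvu, up, uq, uv, pq, pv, qv⟩ := h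
    have grb' := h'.gr
    obtain ⟨np', np2', nq', nq2', nuv', nvu', up', uq', uv', pq', pv', qv'⟩ := h'
    have : q' = v := by have := nq q'; grind
    subst this
    have : u' = p := by have := nq u'; grind
    subst this
    have : v' ≠ u := by rintro rfl; grind
    ext s t; simp only [gcon_adj, gsw_adj, Equiv.swap_apply_def]
    grind
  have e2 : gcon G u p q v = gsw p q' (gcon G u' q q' v') := by
    rw [e1]; ext s t; simp only [gsw_adj, Equiv.swap_apply_self]
  exact ⟨fun hp => C.sw _ _ p q' hs hs' hp e1, fun hp => C.sw _ _ p q' hs hs' hp e2⟩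

theorem BB_touch {G P} (C : Ctx G P) {u p q v u' p' q' v'} (h : RB G u p q v)
    (h' : RB G u' p' q' v') (h1 : p' ≠ p) (h2 : p' ≠ q) (h3 : q' ≠ p) (h4 : q' ≠ q)
    (hu : u = p') : P (gcon G u p q v) ↔ P (gcon G u' p' q' v') := by
  have hm : RB G q' p' p q := by
    have grb := h.gr
    obtain ⟨np, np2, nq, nq2, nuv, nvu, up, uq, uv, pq, pv, qv⟩ := h
    have grb' := h'.gr
    obtain ⟨np', np2', nq', nq2', nuv', nvu', up', uq', uv', pq', pv', qv'⟩ := h'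
    subst hu
    have : u' = p := by have := np' p; grind
    subst this
    refine ⟨?_, ?_, ?_, ?_, ?_, ?_, ?_, ?_, ?_, ?_, ?_, ?_⟩
    all_goals grind
  have A1 := BB_over C hm h h2.symm
  have A2 := BB_over C hm.sy h' h3
  rw [gcon_sy] at A2
  exact A1.symm.trans A2

theorem BB_gen {G P} (C : Ctx G P) {u p q v u' p' q' v'} (h : RB G u p q v)
    (h' : RB G u' p' q' v') (h1 : p' ≠ p) (h2 : p' ≠ q) (h3 : q' ≠ p) (h4 : q' ≠ q)
    (a1 : u ≠ p') (a2 : u ≠ q') (a3 : v ≠ p') (a4 : v ≠ q') :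
    ∃ K, Relation.ReflTransGen Red (gcon G u p q v) K ∧
      K = gcon (gcon G u p q v) u' p' q' v' := by
  have grb := h.gr
  obtain ⟨np, np2, nq, nq2, nuv, nvu, up, uq, uv, pq, pv, qv⟩ := h
  have grb' := h'.gr
  obtain ⟨np', np2', nq', nq2', nuv', nvu', up', uq', uv', pq', pv', qv'⟩ := h'
  have ac := G.adj_comm
  have ir := G.loopless.irrefl
  have b1 : u' ≠ p := by have := np p'; grind
  have b2 : u' ≠ q := by have := nq p'; grind
  have b3 : v' ≠ p := by have := np q'; grind
  have b4 : v' ≠ q := by have := nq q'; grind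
  by_cases hc : (u = u' ∧ v = v') ∨ (u = v' ∧ v = u')
  · have s1 : RA (gcon G u p q v) u' q' v' p' := by
      refine ⟨?_, ?_, ?_, ?_, ?_⟩
      all_goals try simp only [gcon_adj]
      all_goals grind
    have s2 : RA (gdel (gcon G u p q v) p') v' v' u' q' := by
      refine ⟨?_, ?_, ?_, ?_, ?_⟩
      all_goals try simp only [gcon_adj, gdel_adj]
      all_goals grind
    refine ⟨_, (Relation.ReflTransGen.single s1.red).tail s2.red, ?_⟩
    ext s t; simp only [gdel_adj, gcon_adj]
    grind
  · have s1 : RB (gcon G u p q v) u' p' q' v' := by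
      refine ⟨?_, ?_, ?_, ?_, ?_, ?_, up', uq', uv', pq', pv', qv'⟩
      all_goals try simp only [gcon_adj]
      all_goals grind
    exact ⟨_, Relation.ReflTransGen.single s1.red, rfl⟩

theorem Ctx.downs {G P} (C : Ctx G P) {K K'} (h : Relation.ReflTransGen Red K K')
    (hs : K.support ⊂ G.support) (p : P K) : P K' ∧ K'.support ⊂ G.support := by
  induction h with
  | refl => exact ⟨p, hs⟩
  | tail _ h ih => exact ⟨C.down _ _ ih.2 ih.1 h, (red_supp h).trans ih.2⟩

theorem Ctx.ups {G P} (C : Ctx G P) {K K'} (h : Relation.ReflTransGen Red K K') (p : P K') :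
    P K := by
  induction h with
  | refl => exact p
  | tail _ h ih => exact ih (C.up _ _ p h)

theorem BB {G P} (C : Ctx G P) {u p q v u' p' q' v'} (h : RB G u p q v)
    (h' : RB G u' p' q' v') (hP : P (gcon G u p q v)) : P (gcon G u' p' q' v') := by
  by_cases h2 : p' = q
  · subst h2
    by_cases hd : q' = p
    · subst hd
      have e : gcon G u' p' q' v' = gcon G u q' p' v := by
        have ac := G.adj_comm
        have grb := h.gr
        obtain ⟨np, np2, nq, nq2, nuv, nvu, up, uq, uv, pq, pv, qv⟩ := h
        have grb' := h'.gr
        obtain ⟨np', np2', nq', nq2', nuv', nvu', up', uq', uv', pq', pv', qv'⟩ := h'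
        have : v' = u := by have := np v'; grind
        have : u' = v := by have := nq u'; grind
        substs u' v'
        exact gcon_sy _ _ _ _ _
      rwa [e]
    · exact (BB_over C h h' hd).1 hP
  by_cases h1 : p' = p
  · subst h1
    by_cases hd : q' = q
    · subst hd
      have e : gcon G u' p' q' v' = gcon G u p' q' v := by
        have ac := G.adj_comm
        have grb := h.gr
        obtain ⟨np, np2, nq, nq2, nuv, nvu, up, uq, uv, pq, pv, qv⟩ := h
        have grb' := h'.gr
        obtain ⟨np', np2', nq', nq2', nuv', nvu', up', uq', uv', pq', pv', qv'⟩ := h'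
        have : u' = u := by have := np u'; grind
        have : v' = v := by have := nq v'; grind
        substs u' v'
        rfl
      rwa [e]
    · rw [← gcon_sy] at hP
      exact (BB_over C h.sy h' hd).1 hP
  by_cases h3 : q' = p
  · subst h3
    rw [← gcon_sy] at hP ⊢
    exact (BB_over C h.sy h'.sy h2).1 hP
  by_cases h4 : q' = q
  · subst h4
    rw [← gcon_sy G u' p' q' v']
    exact (BB_over C h h'.sy h1).1 hP
  by_cases a1 : u = p'
  · exact (BB_touch C h h' h1 h2 h3 h4 a1).1 hP
  by_cases a2 : u = q'
  · rw [← gcon_sy G u' p' q' v']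
    exact (BB_touch C h h'.sy h3 h4 h1 h2 a2).1 hP
  by_cases a3 : v = p'
  · rw [← gcon_sy] at hP
    exact (BB_touch C h.sy h' h2 h1 h4 h3 a3).1 hP
  by_cases a4 : v = q'
  · rw [← gcon_sy] at hP ⊢
    exact (BB_touch C h.sy h'.sy h4 h3 h2 h1 a4).1 hP
  have b1 : u' ≠ p := by rintro rfl; have := h'.np u; have := h.np p'; have := G.adj_comm u' p'; have := h'.np u'; grind
  have b2 : u' ≠ q := by rintro rfl; have := h.nq p'; have := G.adj_comm u' p'; have := h'.np u'; grind
  have b3 : v' ≠ p := by rintro rfl; have := h.np q'; have := G.adj_comm v' q'; have := h'.nq v'; grind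
  have b4 : v' ≠ q := by rintro rfl; have := h.nq q'; have := G.adj_comm v' q'; have := h'.nq v'; grind
  obtain ⟨K, hK, e⟩ := BB_gen C h h' h1 h2 h3 h4 a1 a2 a3 a4
  obtain ⟨K', hK', e'⟩ := BB_gen C h' h (Ne.symm h1) (Ne.symm h3) (Ne.symm h2) (Ne.symm h4) b1 b2 b3 b4
  have hh : K = K' := by
    rw [e, e']
    ext s t
    simp only [gcon_adj]
    clear e e' hK hK' C hP
    have := h'.up
    grind
  subst hh
  exact C.ups hK' (C.downs hK (red_supp h.red) hP).1

theorem conf {G P} (C : Ctx G P) {G1 G2} (h1 : Red G G1) (h2 : Red G G2) (hP : P G1) : P G2 := by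
  rcases h1 with ⟨x, y, z, w, h, rfl⟩ | ⟨u, p, q, v, h, rfl⟩ <;>
  rcases h2 with ⟨x', y', z', w', h', rfl⟩ | ⟨u', p', q', v', h', rfl⟩
  · exact conf_AA C h h' hP
  · exact (AB C h h').1 hP
  · exact (AB C h' h).2 hP
  · exact BB C h h' hP

theorem supp_fin_of_red {G G' : SimpleGraph ℕ} (h : Red G G') (hf : G'.support.Finite) :
    G.support.Finite := by
  rcases h with ⟨x, y, z, w, ⟨nb, nb2, xz, yz, ne⟩, rfl⟩ |
    ⟨u, p, q, v, ⟨np, np2, nq, nq2, nuv, nvu, up, uq, uv, pq, pv, qv⟩, rfl⟩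
  · refine (hf.union (Set.toFinite {w, x, y})).subset ?_
    rintro a ⟨b, hb⟩
    by_cases h : a ≠ w ∧ b ≠ w
    · exact Or.inl ⟨b, hb, h⟩
    · right
      simp only [Set.mem_insert_iff, Set.mem_singleton_iff]
      grind
  · refine (hf.union (Set.toFinite {u, p, q, v})).subset ?_
    rintro a ⟨b, hb⟩
    by_cases h : a ≠ p ∧ a ≠ q ∧ b ≠ p ∧ b ≠ q
    · exact Or.inl ⟨b, Or.inl ⟨hb, h⟩⟩
    · right
      simp only [Set.mem_insert_iff, Set.mem_singleton_iff]
      grind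

theorem stmt_0 (H H' : SimpleGraph ℕ) (hfin : H.edgeSet.Finite)
    (hbip : H.Colorable 2)
    (hdeg : ∀ v ∈ H.support, 3 ≤ (H.neighborSet v).ncard)
    (h : Relation.ReflTransGen OpAny H H') :
    Relation.ReflTransGen OpFwd H H' := by
  have hB : Bip H := by
    obtain ⟨c⟩ := hbip
    refine ⟨fun a => decide (c a = 0), fun a b hab => ?_⟩
    have := c.valid hab
    grind
  have hF : H.support.Finite := by
    refine (hfin.biUnion (t := fun e => {a | a ∈ e}) ?_).subset ?_
    · intro e _
      induction e with
      | _ a b => exact (Set.toFinite {a, b}).subset (fun c hc => Sym2.mem_iff.1 hc)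
    · rintro a ⟨b, hab⟩
      exact Set.mem_biUnion (show s(a, b) ∈ H.edgeSet from hab) (by simp)
  have hS : ∀ v ∈ H.support, ¬ SmallV H v := by
    rintro v hv ⟨x, y, hxy⟩
    have h3 := hdeg v hv
    have h1 : H.neighborSet v ⊆ {x, y} := fun a ha => hxy a ha
    have h2 := Set.ncard_le_ncard h1 (Set.toFinite _)
    have h4 : ({x, y} : Set ℕ).ncard ≤ 2 := by
      have := Set.ncard_insert_le x {y}
      rw [Set.ncard_singleton] at this
      exact this
    omega
  set P : SimpleGraph ℕ → Prop := fun G => Relation.ReflTransGen OpFwd H G with hPdef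
  have PB : ∀ G, P G → Bip G := by
    intro G hG
    induction hG with
    | refl => exact hB
    | tail _ h ih => exact bip_of_red' (red_of_fwd h) ih
  have PF : ∀ G, P G → G.support.Finite := by
    intro G hG
    induction hG with
    | refl => exact hF
    | tail _ h ih => exact supp_fin_of_red (red_of_fwd h) ih
  have PS : ∀ G, P G → ∀ v ∈ H.support, ¬ SmallV G v := by
    intro G hG
    induction hG with
    | refl => exact hS
    | tail _ h ih => exact fun v hv hs => ih v hv (small_of_red (red_of_fwd h) v hs)
  have Pup : ∀ K K', P K → Red K' K → P K' := fun K K' hK hr =>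
    Relation.ReflTransGen.tail hK (fwd_of_red (PB _ hK) hr)
  have Psw : ∀ K a b, a ∉ H.support → b ∉ H.support → P K → P (gsw a b K) := by
    intro K a b ha hb hK
    induction hK with
    | refl =>
      have : gsw a b H = H := by
        ext s t
        rw [gsw_adj]
        have ha1 : ∀ c, ¬ H.Adj a c := fun c hc => ha ⟨c, hc⟩
        have ha2 : ∀ c, ¬ H.Adj c a := fun c hc => ha ⟨c, hc.symm⟩
        have hb1 : ∀ c, ¬ H.Adj b c := fun c hc => hb ⟨c, hc⟩
        have hb2 : ∀ c, ¬ H.Adj c b := fun c hc => hb ⟨c, hc.symm⟩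
        simp only [Equiv.swap_apply_def]
        grind
      rw [this]
    | tail _ h ih => exact Pup _ _ ih (red_gsw a b (red_of_fwd h))
  have main : ∀ n, ∀ G, G.support.ncard = n → P G → ∀ G', Red G G' → P G' := by
    intro n
    induction n using Nat.strong_induction_on with
    | _ n IH =>
      intro G hn hG G' hr
      have C : Ctx G P := by
        refine ⟨fun K K' hs hK hKr => ?_, Pup, ?_⟩
        · exact IH _ (by rw [← hn]; exact Set.ncard_lt_ncard hs (PF _ hG)) K rfl hK K' hKr
        · rintro K K' a b ha hb hK rfl
          exact Psw K a b (fun h => PS G hG a h ha) (fun h => PS G hG b h hb) hK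
      rcases Relation.ReflTransGen.cases_tail hG with rfl | ⟨G1, hG1, hf⟩
      · exfalso
        rcases hr with ⟨x, y, z, w, h, rfl⟩ | ⟨u, p, q, v, h, rfl⟩
        · exact hS w ⟨x, (h.nb x).2 (Or.inl rfl)⟩ h.small
        · exact hS p ⟨u, (h.np u).2 (Or.inl rfl)⟩ h.small
      · exact conf C (red_of_fwd hf) hr hG1
  induction h with
  | refl => exact Relation.ReflTransGen.refl
  | tail _ h ih =>
    rcases h with h | h
    · exact Relation.ReflTransGen.tail ih h
    · exact main _ _ rfl ih _ (red_of_fwd h)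
end

section
/- Let H be a bipartite simple graph with finitely many edges such that every support vertex of H has degree at least 3, and let t be a natural number. If a graph H' can be obtained from H by a sequence of exactly t operations, each of which is one of (I), (II), (III), (I'), (II'), (III'), then H' can be obtained from H by a sequence of at most t operations, each of which is one of (I), (II), (III). -/
open SimpleGraph

/-- `SeqN R n H H'` : `H'` is obtained from `H` by a sequence of exactly `n`
steps of the relation `R`. -/
inductive SeqN (R : SimpleGraph ℕ → SimpleGraph ℕ → Prop) :
    ℕ → SimpleGraph ℕ → SimpleGraph ℕ → Prop
  | refl (H : SimpleGraph ℕ) : SeqN R 0 H H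
  | tail {n : ℕ} {H G G' : SimpleGraph ℕ} :
      SeqN R n H G → R G G' → SeqN R (n + 1) H G'

/-- delete a vertex -/
def dl (G : SimpleGraph ℕ) (w : ℕ) : SimpleGraph ℕ where
  Adj x y := G.Adj x y ∧ x ≠ w ∧ y ≠ w
  symm := ⟨fun x y h => ⟨h.1.symm, h.2.2, h.2.1⟩⟩
  loopless := ⟨fun x h => G.loopless.irrefl x h.1⟩

/-- suppress a path `u p q v` -/
def sm (G : SimpleGraph ℕ) (u p q v : ℕ) : SimpleGraph ℕ where
  Adj x y := x ≠ y ∧ ((G.Adj x y ∧ x ≠ p ∧ x ≠ q ∧ y ≠ p ∧ y ≠ q) ∨ (x = u ∧ y = v) ∨ (x = v ∧ y = u))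
  symm := ⟨fun x y h => by have := G.adj_comm x y; grind⟩
  loopless := ⟨fun x h => h.1 rfl⟩

/-- relabelling by an involution -/
def rl (G : SimpleGraph ℕ) (f : ℕ → ℕ) : SimpleGraph ℕ where
  Adj x y := G.Adj (f x) (f y)
  symm := ⟨fun x y h => h.symm⟩
  loopless := ⟨fun x h => G.loopless.irrefl _ h⟩

theorem dl_adj (G : SimpleGraph ℕ) (w x y : ℕ) :
    (dl G w).Adj x y ↔ G.Adj x y ∧ x ≠ w ∧ y ≠ w := Iff.rfl
theorem sm_adj (G : SimpleGraph ℕ) (u p q v x y : ℕ) :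
    (sm G u p q v).Adj x y ↔ x ≠ y ∧ ((G.Adj x y ∧ x ≠ p ∧ x ≠ q ∧ y ≠ p ∧ y ≠ q) ∨ (x = u ∧ y = v) ∨ (x = v ∧ y = u)) := Iff.rfl
theorem rl_adj (G : SimpleGraph ℕ) (f : ℕ → ℕ) (x y : ℕ) :
    (rl G f).Adj x y ↔ G.Adj (f x) (f y) := Iff.rfl

/-- `w` is a removable vertex -/
def CA (G : SimpleGraph ℕ) (w z a b : ℕ) : Prop :=
  z ≠ w ∧ (∀ y, G.Adj w y ↔ y = a ∨ y = b) ∧ G.Adj z a ∧ G.Adj z b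

/-- `u p q v` is a suppressible path -/
def CB (G : SimpleGraph ℕ) (u p q v : ℕ) : Prop :=
  (∀ y, G.Adj p y ↔ y = u ∨ y = q) ∧ (∀ y, G.Adj q y ↔ y = p ∨ y = v) ∧
  u ≠ q ∧ v ≠ p ∧ u ≠ v ∧ ¬ G.Adj u v

/-- unified forward step -/
def FF (G' G : SimpleGraph ℕ) : Prop :=
  (∃ w z a b, CA G w z a b ∧ G' = dl G w) ∨ (∃ u p q v, CB G u p q v ∧ G' = sm G u p q v)

/-- at most two neighbours -/
def Low (G : SimpleGraph ℕ) (x : ℕ) : Prop := ∃ a b, ∀ y, G.Adj x y → y = a ∨ y = b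

/-- relabelling of low vertices -/
def EE (G K : SimpleGraph ℕ) : Prop :=
  ∃ f : ℕ → ℕ, (∀ x, f (f x) = x) ∧ (∀ x, f x ≠ x → Low G x) ∧ K = rl G f

theorem CB.rev {G : SimpleGraph ℕ} {u p q v : ℕ} (h : CB G u p q v) : CB G v q p u := by
  obtain ⟨h1, h2, h3, h4, h5, h6⟩ := h
  exact ⟨fun y => (h2 y).trans or_comm, fun y => (h1 y).trans or_comm, h4, h3, h5.symm,
    fun h => h6 h.symm⟩

theorem sm_rev (G : SimpleGraph ℕ) (u p q v : ℕ) : sm G u p q v = sm G v q p u := by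
  ext x y; simp only [sm_adj]; grind

theorem op_ff {G' G : SimpleGraph ℕ} (h : OpFwd G' G) : FF G' G := by
  rcases h with ⟨v, w, ⟨z, hv⟩, hw, rfl⟩ | ⟨u, v, p, q, huv, hp, hq, hpq, rfl⟩ |
      ⟨x, y, z, w, hxy, hn, hx, hy, hw, rfl⟩
  · left
    simp only [mem_support, not_exists] at hw
    have h0 := fun x y => G'.adj_comm x y
    refine ⟨w, z, v, v, ⟨?_, ?_, ?_, ?_⟩, ?_⟩
    · grind
    · intro y; simp only [sup_adj, edge_adj]; grind
    · simp only [sup_adj, edge_adj]; grind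
    · simp only [sup_adj, edge_adj]; grind
    · ext x y; simp only [dl_adj, sup_adj, edge_adj]; grind
  · right
    simp only [mem_support, not_exists] at hp hq
    have h0 := fun x y => G'.adj_comm x y
    have h1 := huv.ne
    refine ⟨u, p, q, v, ⟨?_, ?_, ?_, ?_, ?_, ?_⟩, ?_⟩
    · intro y; simp only [sup_adj, edge_adj, deleteEdges_adj, Set.mem_singleton_iff, Sym2.eq_iff]; grind
    · intro y; simp only [sup_adj, edge_adj, deleteEdges_adj, Set.mem_singleton_iff, Sym2.eq_iff]; grind
    · grind
    · grind
    · grind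
    · simp only [sup_adj, edge_adj, deleteEdges_adj, Set.mem_singleton_iff, Sym2.eq_iff]; grind
    · ext x y
      have h2 := G'.ne_of_adj (a := x) (b := y)
      simp only [sm_adj, sup_adj, edge_adj, deleteEdges_adj, Set.mem_singleton_iff, Sym2.eq_iff]; grind
  · left
    simp only [mem_support, not_exists] at hw
    have h0 := fun x y => G'.adj_comm x y
    refine ⟨w, z, x, y, ⟨?_, ?_, ?_, ?_⟩, ?_⟩
    · grind
    · intro y; simp only [sup_adj, edge_adj]; grind
    · simp only [sup_adj, edge_adj]; grind
    · simp only [sup_adj, edge_adj]; grind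
    · ext x y; simp only [dl_adj, sup_adj, edge_adj]; grind

theorem ff_op {G' G : SimpleGraph ℕ} (c : ℕ → Bool) (hc : ∀ x y, G.Adj x y → c x ≠ c y)
    (h : FF G' G) : OpFwd G' G := by
  have h0 := fun x y => G.adj_comm x y
  have hi := fun x => G.loopless.irrefl x
  rcases h with ⟨w, z, a, b, ⟨h1, h2, h3, h4⟩, rfl⟩ | ⟨u, p, q, v, ⟨h1, h2, h3, h4, h5, h6⟩, rfl⟩
  · have ea := (h2 a).2 (Or.inl rfl)
    have eb := (h2 b).2 (Or.inr rfl)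
    by_cases hab : a = b
    · left
      refine ⟨a, w, ⟨z, ?_⟩, ?_, ?_⟩
      · simp only [dl_adj]; grind
      · simp only [mem_support, dl_adj]; grind
      · ext x y; have := h2 x; have := h2 y; have := h0 x w; have := h0 x y
        simp only [dl_adj, sup_adj, edge_adj]; grind
    · right; right
      refine ⟨a, b, z, w, hab, ?_, ?_, ?_, ?_, ?_⟩
      · simp only [dl_adj]
        have q1 := hc w a ea; have q2 := hc w b eb; have q3 := hc a b
        intro hh
        have q4 := q3 hh.1
        revert q1 q2 q4
        cases c w <;> cases c a <;> cases c b <;> simp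
      · simp only [dl_adj]; grind
      · simp only [dl_adj]; grind
      · simp only [mem_support, dl_adj]; grind
      · ext x y; have := h2 x; have := h2 y; have := h0 x w; have := h0 x y
        simp only [dl_adj, sup_adj, edge_adj]; grind
  · have e1 := (h1 u).2 (Or.inl rfl)
    have e2 := (h2 v).2 (Or.inr rfl)
    have e3 := (h1 q).2 (Or.inr rfl)
    right; left
    refine ⟨u, v, p, q, ?_, ?_, ?_, ?_, ?_⟩
    · simp only [sm_adj]; grind
    · simp only [mem_support, sm_adj]; grind
    · simp only [mem_support, sm_adj]; grind
    · grind
    · ext x y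
      have := h1 x; have := h1 y; have := h2 x; have := h2 y; have := h0 x y
      have := h0 x p; have := h0 x q
      have h2 := G.ne_of_adj (a := x) (b := y)
      simp only [sm_adj, sup_adj, edge_adj, deleteEdges_adj, Set.mem_singleton_iff, Sym2.eq_iff]; grind

theorem ff_col {G' G : SimpleGraph ℕ} (h : FF G' G)
    (h' : ∃ c : ℕ → Bool, ∀ x y, G'.Adj x y → c x ≠ c y) :
    ∃ c : ℕ → Bool, ∀ x y, G.Adj x y → c x ≠ c y := by
  have h0 := fun x y => G.adj_comm x y
  have hi := fun x => G.loopless.irrefl x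
  obtain ⟨c, hc⟩ := h'
  rcases h with ⟨w, z, a, b, ⟨h1, h2, h3, h4⟩, rfl⟩ | ⟨u, p, q, v, ⟨h1, h2, h3, h4, h5, h6⟩, rfl⟩
  · refine ⟨fun x => if x = w then c z else c x, fun x y h => ?_⟩
    simp only [dl_adj] at hc
    have := hc x y; have := hc z x; have := hc z y
    grind
  · refine ⟨fun x => if x = p then c v else if x = q then c u else c x, fun x y h => ?_⟩
    simp only [sm_adj] at hc
    have := hc x y; have := hc u v; have := G.ne_of_adj h
    grind

theorem ff_low {G' G : SimpleGraph ℕ} (h : FF G' G) {x : ℕ} (hl : Low G x) : Low G' x := by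
  have h0 := fun x y => G.adj_comm x y
  have hi := fun x => G.loopless.irrefl x
  obtain ⟨a', b', hl⟩ := hl
  rcases h with ⟨w, z, a, b, ⟨h1, h2, h3, h4⟩, rfl⟩ | ⟨u, p, q, v, ⟨h1, h2, h3, h4, h5, h6⟩, rfl⟩
  · exact ⟨a', b', fun y hy => hl y hy.1⟩
  · have e1 := (h1 u).2 (Or.inl rfl)
    have e2 := (h2 v).2 (Or.inr rfl)
    by_cases hu : x = u
    · refine ⟨if a' = p then v else a', if b' = p then v else b', fun y => ?_⟩
      simp only [sm_adj]
      grind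
    · by_cases hv : x = v
      · refine ⟨if a' = q then u else a', if b' = q then u else b', fun y => ?_⟩
        simp only [sm_adj]
        grind
      · refine ⟨a', b', fun y => ?_⟩
        simp only [sm_adj]
        grind

theorem ff_rl {G' G : SimpleGraph ℕ} (h : FF G' G) {f : ℕ → ℕ} (hf : ∀ x, f (f x) = x) :
    FF (rl G' f) (rl G f) := by
  have he : ∀ x y, f x = y ↔ x = f y := by grind
  have he' : ∀ x y, f x = f y ↔ x = y := by grind
  rcases h with ⟨w, z, a, b, ⟨h1, h2, h3, h4⟩, rfl⟩ | ⟨u, p, q, v, ⟨h1, h2, h3, h4, h5, h6⟩, rfl⟩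
  · left
    refine ⟨f w, f z, f a, f b, ⟨?_, ?_, ?_, ?_⟩, ?_⟩
    · grind
    · intro y; simp only [rl_adj, hf, h2, he]
    · simpa only [rl_adj, hf]
    · simpa only [rl_adj, hf]
    · ext x y; simp only [rl_adj, dl_adj, ne_eq, he]
  · right
    refine ⟨f u, f p, f q, f v, ⟨?_, ?_, ?_, ?_, ?_, ?_⟩, ?_⟩
    · intro y; simp only [rl_adj, hf, h1, he]
    · intro y; simp only [rl_adj, hf, h2, he]
    · grind
    · grind
    · grind
    · simpa only [rl_adj, hf]
    · ext x y; simp only [rl_adj, sm_adj, ne_eq, he, hf]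

theorem EE.refl (G : SimpleGraph ℕ) : EE G G :=
  ⟨id, fun _ => rfl, fun _ h => absurd rfl h, rfl⟩

/-- the outcome of the diamond -/
def DD (G1 G' : SimpleGraph ℕ) : Prop :=
  EE G1 G' ∨ (∃ K, FF K G1 ∧ FF K G') ∨ (∃ K, EE G1 K ∧ FF K G') ∨ (∃ K, FF K G1 ∧ EE K G')

theorem commA {G : SimpleGraph ℕ} {w z a b w' z' a' b' : ℕ} (h : CA G w z a b)
    (h' : CA G w' z' a' b') (hw : w ≠ w') (hz : z' ≠ w) :
    FF (dl (dl G w) w') (dl G w) := by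
  have h0 := fun x y => G.adj_comm x y
  have hi := fun x => G.loopless.irrefl x
  obtain ⟨h1, h2, h3, h4⟩ := h
  obtain ⟨k1, k2, k3, k4⟩ := h'
  have e1 := (h2 a).2 (Or.inl rfl)
  have e2 := (k2 a').2 (Or.inl rfl)
  have e3 := (k2 b').2 (Or.inr rfl)
  have e4 : ¬ (a' = w ∧ b' = w) := by
    rintro ⟨rfl, rfl⟩
    have := h2 w'
    have := h0 z w'
    have := k2 z
    grind
  left
  refine ⟨w', z', if a' = w then b' else a', if b' = w then a' else b', ⟨?_, ?_, ?_, ?_⟩, rfl⟩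
  · exact k1
  · intro y; simp only [dl_adj, k2]; grind
  · simp only [dl_adj]; grind
  · simp only [dl_adj]; grind

theorem dl_comm (G : SimpleGraph ℕ) (w w' : ℕ) : dl (dl G w) w' = dl (dl G w') w := by
  ext x y; simp only [dl_adj]; tauto

theorem dAA {G : SimpleGraph ℕ} {w z a b w' z' a' b' : ℕ} (h : CA G w z a b)
    (h' : CA G w' z' a' b') : DD (dl G w) (dl G w') := by
  by_cases hw : w = w'
  · subst hw; exact Or.inl (EE.refl _)
  have h0 := fun x y => G.adj_comm x y
  have hi := fun x => G.loopless.irrefl x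
  have key : ∀ z z', CA G w z a b → CA G w' z' a' b' → z' ≠ w → z ≠ w' →
      DD (dl G w) (dl G w') := fun z z' h h' hz' hz =>
    Or.inr (Or.inl ⟨_, commA h h' hw hz', by rw [dl_comm]; exact commA h' h (Ne.symm hw) hz⟩)
  by_cases hz' : z' = w
  · subst hz'
    by_cases hz : z = w'
    · subst hz
      left
      obtain ⟨h1, h2, h3, h4⟩ := h
      obtain ⟨k1, k2, k3, k4⟩ := h'
      have tw : ∀ y, G.Adj z y ↔ G.Adj z' y := by
        intro y; have := h2 y; have := k2 y; grind
      refine ⟨fun x => if x = z then z' else if x = z' then z else x, ?_, ?_, ?_⟩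
      · grind
      · intro x hx
        refine ⟨a, b, fun y => ?_⟩
        simp only [dl_adj]; grind
      · ext x y
        simp only [dl_adj, rl_adj]
        have := tw x; have := tw y; have := h0 x z; have := h0 x z'
        have := tw z; have := tw z'
        grind
    · refine key z z h ⟨hz, h'.2.1, ?_, ?_⟩ h.1 hz
      · have := (h.2.1 a').1 h'.2.2.1
        have := h.2.2; grind
      · have := (h.2.1 b').1 h'.2.2.2
        have := h.2.2; grind
  · by_cases hz : z = w'
    · subst hz
      refine key z' z' ⟨hz', h.2.1, ?_, ?_⟩ h' hz' h'.1
      · have := (h'.2.1 a).1 h.2.2.1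
        have := h'.2.2; grind
      · have := (h'.2.1 b).1 h.2.2.2
        have := h'.2.2; grind
    · exact key z z' h h' hz' hz

/-- generic commutation -/
theorem commAB {G : SimpleGraph ℕ} {w z a b u p q v : ℕ} (h : CA G w z a b)
    (h' : CB G u p q v) (n1 : w ≠ u) (n2 : w ≠ p) (n3 : w ≠ q) (n4 : w ≠ v) :
    FF (sm (dl G w) u p q v) (dl G w) ∧ FF (sm (dl G w) u p q v) (sm G u p q v) := by
  have h0 := fun x y => G.adj_comm x y
  have hi := fun x => G.loopless.irrefl x
  obtain ⟨h1, h2, h3, h4⟩ := h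
  obtain ⟨k1, k2, k3, k4, k5, k6⟩ := h'
  have ea := (h2 a).2 (Or.inl rfl)
  have eb := (h2 b).2 (Or.inr rfl)
  have wp : ¬ G.Adj w p := by rw [h0]; grind
  have wq : ¬ G.Adj w q := by rw [h0]; grind
  have hu := (k1 u).2 (Or.inl rfl)
  have hv := (k2 v).2 (Or.inr rfl)
  constructor
  · right
    refine ⟨u, p, q, v, ⟨?_, ?_, k3, k4, k5, fun h => k6 h.1⟩, rfl⟩
    · intro y; simp only [dl_adj, k1]; grind
    · intro y; simp only [dl_adj, k2]; grind
  · left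
    have ap : a ≠ p := by grind
    have aq : a ≠ q := by grind
    have bp : b ≠ p := by grind
    have bq : b ≠ q := by grind
    have za : z ≠ a := by grind
    have zb : z ≠ b := by grind
    have wa : w ≠ a := by grind
    have wb : w ≠ b := by grind
    refine ⟨w, if z = p then v else if z = q then u else z, a, b, ⟨?_, ?_, ?_, ?_⟩, ?_⟩
    · grind
    · intro y; simp only [sm_adj, h2]; grind
    · have := k1 a; have := k2 a
      simp only [sm_adj]; grind
    · have := k1 b; have := k2 b
      simp only [sm_adj]; grind
    · ext x y
      simp only [sm_adj, dl_adj]; grind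

/-- the degenerate case `w = u` -/
theorem degAB {G : SimpleGraph ℕ} {z a b u p q v : ℕ} (h : CA G u z a b)
    (h' : CB G u p q v) : DD (dl G u) (sm G u p q v) ∧ DD (sm G u p q v) (dl G u) := by
  have h0 := fun x y => G.adj_comm x y
  have hi := fun x => G.loopless.irrefl x
  obtain ⟨h1, h2, h3, h4⟩ := h
  obtain ⟨k1, k2, k3, k4, k5, k6⟩ := h'
  have ea := (h2 a).2 (Or.inl rfl)
  have eb := (h2 b).2 (Or.inr rfl)
  have hu := (k1 u).2 (Or.inl rfl)
  have hq := (k1 q).2 (Or.inr rfl)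
  have hv := (k2 v).2 (Or.inr rfl)
  have up : G.Adj u p := by grind
  have zq : z = q := by
    have : G.Adj p z := by have := (h2 p).1 up; grind
    have := (k1 z).1 this
    grind
  subst zq
  have ap : a = p := by have := (k2 a).1 h3; grind
  have bp : b = p := by have := (k2 b).1 h4; grind
  subst ap
  subst bp
  have ne1 : b ≠ z := by grind
  have ne2 : b ≠ u := by grind
  have ne3 : z ≠ v := by grind
  have vz : G.Adj v z := by grind
  have F : FF (dl (dl G u) b) (dl G u) := by
    left
    refine ⟨b, v, z, z, ⟨k4, ?_, ?_, ?_⟩, rfl⟩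
    · intro y; simp only [dl_adj, k1]; grind
    · simp only [dl_adj]; grind
    · simp only [dl_adj]; grind
  have nbv : ¬ G.Adj b v := by grind
  constructor
  · right; right; right
    refine ⟨_, F, fun x => if x = z then u else if x = u then z else x, ?_, ?_, ?_⟩
    · grind
    · intro x hx
      refine ⟨v, v, fun y => ?_⟩
      simp only [dl_adj]
      grind
    · ext x y
      have := h0 x y; have := h2 x; have := h2 y; have := k2 x; have := k2 y
      have := h0 x u; have := h0 x z; have := hi x
      simp only [dl_adj, rl_adj, sm_adj]; grind
  · right; right; left
    refine ⟨_, ⟨fun x => if x = z then u else if x = u then z else x, ?_, ?_, ?_⟩, F⟩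
    · grind
    · intro x hx
      refine ⟨v, v, fun y => ?_⟩
      simp only [sm_adj]
      grind
    · ext x y
      have := h0 x y; have := h2 x; have := h2 y; have := k2 x; have := k2 y
      have := h0 x u; have := h0 x z; have := hi x
      simp only [dl_adj, rl_adj, sm_adj]; grind

/-- `p` is never removable -/
theorem notp {G : SimpleGraph ℕ} {z a b u p q v : ℕ} (h : CA G p z a b)
    (h' : CB G u p q v) : False := by
  have h0 := fun x y => G.adj_comm x y
  obtain ⟨h1, h2, h3, h4⟩ := h
  obtain ⟨k1, k2, k3, k4, k5, k6⟩ := h'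
  have hu := (h2 u).1 ((k1 u).2 (Or.inl rfl))
  have hq := (h2 q).1 ((k1 q).2 (Or.inr rfl))
  have zu : G.Adj z u := by grind
  have zq : G.Adj q z := by grind
  have := (k2 z).1 zq
  grind

theorem dAB {G : SimpleGraph ℕ} {w z a b u p q v : ℕ} (h : CA G w z a b)
    (h' : CB G u p q v) : DD (dl G w) (sm G u p q v) ∧ DD (sm G u p q v) (dl G w) := by
  by_cases n1 : w = u
  · subst n1; exact degAB h h'
  by_cases n2 : w = p
  · subst n2; exact (notp h h').elim
  by_cases n3 : w = q
  · subst n3; exact (notp h h'.rev).elim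
  by_cases n4 : w = v
  · subst n4; rw [sm_rev]; exact degAB h h'.rev
  have := commAB h h' n1 n2 n3 n4
  exact ⟨Or.inr (Or.inl ⟨_, this.1, this.2⟩), Or.inr (Or.inl ⟨_, this.2, this.1⟩)⟩

/-- same inner pair -/
theorem bb0 {G : SimpleGraph ℕ} {u p q v u' v' : ℕ} (h : CB G u p q v)
    (h' : CB G u' p q v') : DD (sm G u p q v) (sm G u' p q v') := by
  obtain ⟨h1, h2, h3, h4, h5, h6⟩ := h
  obtain ⟨k1, k2, k3, k4, k5, k6⟩ := h'
  have : u' = u := by have := h1 u'; have := k1 u'; grind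
  have : v' = v := by have := h2 v'; have := k2 v'; grind
  subst u' v'
  exact Or.inl (EE.refl _)

/-- overlap in one vertex -/
theorem bb1 {G : SimpleGraph ℕ} {u p q v u' q' v' : ℕ} (h : CB G u p q v)
    (h' : CB G u' q q' v') (hne : q' ≠ p) : DD (sm G u p q v) (sm G u' q q' v') := by
  have h0 := fun x y => G.adj_comm x y
  have hi := fun x => G.loopless.irrefl x
  obtain ⟨h1, h2, h3, h4, h5, h6⟩ := h
  obtain ⟨k1, k2, k3, k4, k5, k6⟩ := h'
  have e1 : q' = v := by
    have := (h2 q').1 ((k1 q').2 (Or.inr rfl)); grind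
  have e2 : u' = p := by
    have := (k1 p).1 ((h2 p).2 (Or.inl rfl)); grind
  subst e1 e2
  have a1 := (h1 u).2 (Or.inl rfl)
  have a2 := (k2 v').2 (Or.inr rfl)
  have a3 := (h1 q).2 (Or.inr rfl)
  have a4 := (k1 q').2 (Or.inr rfl)
  have : u ≠ v' := by grind
  left
  refine ⟨fun x => if x = u' then q' else if x = q' then u' else x, ?_, ?_, ?_⟩
  · grind
  · intro x hx
    refine ⟨u, v', fun y => ?_⟩
    simp only [sm_adj]
    grind
  · ext x y
    have := h0 x y; have := h1 x; have := h1 y; have := k2 x; have := k2 y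
    have := h0 x u'; have := h0 x q'; have := hi x
    simp only [rl_adj, sm_adj]; grind

/-- consecutive -/
theorem bb2 {G : SimpleGraph ℕ} {u p q v u' q' v' : ℕ} (h : CB G u p q v)
    (h' : CB G u' v q' v') (hne : q' ≠ q) : DD (sm G u p q v) (sm G u' v q' v') := by
  have h0 := fun x y => G.adj_comm x y
  have hi := fun x => G.loopless.irrefl x
  obtain ⟨h1, h2, h3, h4, h5, h6⟩ := h
  obtain ⟨k1, k2, k3, k4, k5, k6⟩ := h'
  have e1 : u' = q := by
    have := (k1 q).1 (by rw [h0]; exact (h2 v).2 (Or.inr rfl)); grind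
  subst e1
  have a1 := (h1 u).2 (Or.inl rfl)
  have a2 := (k2 v').2 (Or.inr rfl)
  have a3 := (h1 u').2 (Or.inr rfl)
  have a4 := (k1 q').2 (Or.inr rfl)
  have a5 := (k1 u').2 (Or.inl rfl)
  have b1 : q' ≠ p := by grind
  have b2 : q' ≠ u := by grind
  have b3 : v' ≠ p := by grind
  left
  refine ⟨fun x => if x = p then v else if x = v then p else if x = u' then q' else
    if x = q' then u' else x, ?_, ?_, ?_⟩
  · grind
  · intro x hx
    by_cases x = v
    · refine ⟨u, q', fun y => ?_⟩
      simp only [sm_adj]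
      grind
    · refine ⟨v, v', fun y => ?_⟩
      simp only [sm_adj]
      grind
  · ext x y
    have := h0 x y; have := h1 x; have := h1 y; have := k2 x; have := k2 y
    have := k1 x; have := k1 y; have := h2 x; have := h2 y
    have := h0 x u'; have := h0 x q'; have := h0 x p; have := h0 x v; have := hi x
    simp only [rl_adj, sm_adj]; grind

/-- parallel -/
theorem bb3 {G : SimpleGraph ℕ} {u p q v p' q' : ℕ} (h : CB G u p q v)
    (h' : CB G u p' q' v) (n1 : p' ≠ p) (n2 : p' ≠ q) (n3 : q' ≠ p) (n4 : q' ≠ q) :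
    DD (sm G u p q v) (sm G u p' q' v) := by
  have h0 := fun x y => G.adj_comm x y
  have hi := fun x => G.loopless.irrefl x
  obtain ⟨h1, h2, h3, h4, h5, h6⟩ := h
  obtain ⟨k1, k2, k3, k4, k5, k6⟩ := h'
  have a1 := (h1 u).2 (Or.inl rfl)
  have a2 := (k2 v).2 (Or.inr rfl)
  have a3 := (h1 q).2 (Or.inr rfl)
  have a4 := (k1 q').2 (Or.inr rfl)
  have a5 := (k1 u).2 (Or.inl rfl)
  have a6 := (h2 v).2 (Or.inr rfl)
  have b1 : p' ≠ u := by grind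
  have b2 : p ≠ u := by grind
  have b3 : q' ≠ v := by grind
  have b4 : q ≠ v := by grind
  left
  refine ⟨fun x => if x = p then p' else if x = p' then p else if x = q then q' else
    if x = q' then q else x, ?_, ?_, ?_⟩
  · grind
  · intro x hx
    by_cases x = p'
    · refine ⟨u, q', fun y => ?_⟩
      simp only [sm_adj]
      grind
    · refine ⟨p', v, fun y => ?_⟩
      simp only [sm_adj]
      grind
  · ext x y
    have := h0 x y; have := h1 x; have := h1 y; have := k2 x; have := k2 y
    have := k1 x; have := k1 y; have := h2 x; have := h2 y
    have := h0 x q; have := h0 x q'; have := h0 x p; have := h0 x p'; have := hi x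
    have b5 : p ≠ q := by grind
    have b6 : p' ≠ q' := by grind
    simp only [rl_adj, sm_adj]; grind (splits := 30)

/-- generic half -/
theorem bb4 {G : SimpleGraph ℕ} {u p q v u' p' q' v' : ℕ} (h : CB G u p q v)
    (h' : CB G u' p' q' v') (n1 : p' ≠ p) (n2 : p' ≠ q) (n3 : q' ≠ p) (n4 : q' ≠ q)
    (m1 : p' ≠ u) (m2 : p' ≠ v) (m3 : q' ≠ u) (m4 : q' ≠ v)
    (o1 : ¬ (u = u' ∧ v = v')) (o2 : ¬ (u = v' ∧ v = u')) :
    FF (sm (sm G u p q v) u' p' q' v') (sm G u p q v) := by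
  have h0 := fun x y => G.adj_comm x y
  have hi := fun x => G.loopless.irrefl x
  obtain ⟨h1, h2, h3, h4, h5, h6⟩ := h
  obtain ⟨k1, k2, k3, k4, k5, k6⟩ := h'
  have a1 := (h1 u).2 (Or.inl rfl)
  have a2 := (k2 v').2 (Or.inr rfl)
  have a3 := (h1 q).2 (Or.inr rfl)
  have a4 := (k1 q').2 (Or.inr rfl)
  have a5 := (k1 u').2 (Or.inl rfl)
  have a6 := (h2 v).2 (Or.inr rfl)
  right
  refine ⟨u', p', q', v', ⟨?_, ?_, k3, k4, k5, ?_⟩, rfl⟩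
  · intro y; simp only [sm_adj, k1]; grind
  · intro y; simp only [sm_adj, k2]; grind
  · simp only [sm_adj]; grind

theorem sm_comm {G : SimpleGraph ℕ} {u p q v u' p' q' v' : ℕ} (h : CB G u p q v)
    (h' : CB G u' p' q' v') (n1 : p' ≠ p) (n2 : p' ≠ q) (n3 : q' ≠ p) (n4 : q' ≠ q)
    (m1 : p' ≠ u) (m2 : p' ≠ v) (m3 : q' ≠ u) (m4 : q' ≠ v)
    (l1 : p ≠ u') (l2 : p ≠ v') (l3 : q ≠ u') (l4 : q ≠ v') :
    sm (sm G u p q v) u' p' q' v' = sm (sm G u' p' q' v') u p q v := by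
  ext x y
  simp only [sm_adj]
  grind

theorem dBB {G : SimpleGraph ℕ} {u p q v u' p' q' v' : ℕ} (h : CB G u p q v)
    (h' : CB G u' p' q' v') : DD (sm G u p q v) (sm G u' p' q' v') := by
  have r := sm_rev G u p q v
  have r' := sm_rev G u' p' q' v'
  have hr := h.rev
  have hr' := h'.rev
  by_cases n1 : p' = p
  · subst n1
    by_cases e : q' = q
    · subst e; exact bb0 h h'
    · rw [r]; exact bb1 hr h' e
  by_cases n2 : p' = q
  · subst n2
    by_cases e : q' = p
    · subst e; rw [r]; exact bb0 hr h'
    · exact bb1 h h' e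
  by_cases n3 : q' = p
  · subst n3
    rw [r, r']; exact bb1 hr hr' n2
  by_cases n4 : q' = q
  · subst n4
    rw [r']; exact bb1 h hr' n1
  by_cases m1 : p' = u
  · subst m1; rw [r]; exact bb2 hr h' n3
  by_cases m2 : p' = v
  · subst m2; exact bb2 h h' n4
  by_cases m3 : q' = u
  · subst m3; rw [r, r']; exact bb2 hr hr' n1
  by_cases m4 : q' = v
  · subst m4; rw [r']; exact bb2 h hr' n2
  by_cases o1 : u = u' ∧ v = v'
  · obtain ⟨rfl, rfl⟩ := o1; exact bb3 h h' n1 n2 n3 n4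
  by_cases o2 : u = v' ∧ v = u'
  · obtain ⟨rfl, rfl⟩ := o2; rw [r']; exact bb3 h hr' n3 n4 n1 n2
  have h0 := fun x y => G.adj_comm x y
  have l1 : p ≠ u' := by
    rintro rfl
    have := (h.1 p').1 (by rw [h0]; exact (h'.1 _).2 (Or.inl rfl)); grind
  have l2 : p ≠ v' := by
    rintro rfl
    have := (h.1 q').1 (by rw [h0]; exact (h'.2.1 _).2 (Or.inr rfl)); grind
  have l3 : q ≠ u' := by
    rintro rfl
    have := (h.2.1 p').1 (by rw [h0]; exact (h'.1 _).2 (Or.inl rfl)); grind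
  have l4 : q ≠ v' := by
    rintro rfl
    have := (h.2.1 q').1 (by rw [h0]; exact (h'.2.1 _).2 (Or.inr rfl)); grind
  right; left
  refine ⟨_, bb4 h h' n1 n2 n3 n4 m1 m2 m3 m4 o1 o2, ?_⟩
  rw [sm_comm h h' n1 n2 n3 n4 m1 m2 m3 m4 l1 l2 l3 l4]
  exact bb4 h' h (Ne.symm n1) (Ne.symm n3) (Ne.symm n2) (Ne.symm n4) l1 l2 l3 l4 (by grind) (by grind)

theorem diamond {G1 G G' : SimpleGraph ℕ} (h : FF G1 G) (h' : FF G' G) : DD G1 G' := by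
  rcases h with ⟨w, z, a, b, h, rfl⟩ | ⟨u, p, q, v, h, rfl⟩ <;>
    rcases h' with ⟨w, z, a, b, h', rfl⟩ | ⟨u, p, q, v, h', rfl⟩
  · exact dAA h h'
  · exact (dAB h h').1
  · exact (dAB h' h).2
  · exact dBB h h'

theorem seq_low {H G : SimpleGraph ℕ} {n : ℕ} (h : SeqN FF n H G) {x : ℕ} (hl : Low G x) :
    Low H x := by
  induction h with
  | refl => exact hl
  | tail _ h ih => exact ih (ff_low h hl)

theorem seq_rl {H G : SimpleGraph ℕ} {n : ℕ} (h : SeqN FF n H G) {f : ℕ → ℕ}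
    (hf : ∀ x, f (f x) = x) : SeqN FF n (rl H f) (rl G f) := by
  induction h with
  | refl => exact SeqN.refl _
  | tail _ h ih => exact ih.tail (ff_rl h hf)

theorem seq_EE {H G K : SimpleGraph ℕ} (hdeg : ∀ v, Low H v → ∀ y, ¬ H.Adj v y) {n : ℕ}
    (h : SeqN FF n H G) (he : EE G K) : SeqN FF n H K := by
  obtain ⟨f, hf, hl, rfl⟩ := he
  have := seq_rl h hf
  have hH : rl H f = H := by
    have hfix : ∀ x y, H.Adj x y → f x = x := fun x y hxy => by
      by_contra hne
      exact hdeg x (seq_low h (hl x hne)) y hxy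
    ext x y
    have h0 := fun x y => H.adj_comm x y
    simp only [rl_adj]
    constructor
    · intro hh
      have h1 := hfix _ _ hh
      have h2 := hfix _ _ hh.symm
      grind
    · intro hh
      have h1 := hfix _ _ hh
      have h2 := hfix _ _ hh.symm
      grind
  rwa [hH] at this

theorem back {H : SimpleGraph ℕ} (hdeg : ∀ v, Low H v → ∀ y, ¬ H.Adj v y) (n : ℕ) :
    ∀ G G' : SimpleGraph ℕ, SeqN FF n H G → FF G' G → ∃ m ≤ n, SeqN FF m H G' := by
  induction n using Nat.strong_induction_on with
  | _ n ih =>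
  intro G G' h hb
  cases h with
  | refl =>
    exfalso
    rcases hb with ⟨w, z, a, b, ⟨h1, h2, h3, h4⟩, rfl⟩ | ⟨u, p, q, v, ⟨h1, h2, h3, h4, h5, h6⟩, rfl⟩
    · exact hdeg w ⟨a, b, fun y => (h2 y).1⟩ a ((h2 a).2 (Or.inl rfl))
    · exact hdeg p ⟨u, q, fun y => (h1 y).1⟩ u ((h1 u).2 (Or.inl rfl))
  | @tail n _ G1 _ h1 hf =>
    rcases diamond hf hb with he | ⟨K, hk1, hk2⟩ | ⟨K, he, hk⟩ | ⟨K, hk, he⟩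
    · exact ⟨n, by omega, seq_EE hdeg h1 he⟩
    · obtain ⟨m, hm, hs⟩ := ih n (by omega) _ _ h1 hk1
      exact ⟨m + 1, by omega, hs.tail hk2⟩
    · exact ⟨n + 1, le_rfl, (seq_EE hdeg h1 he).tail hk⟩
    · obtain ⟨m, hm, hs⟩ := ih n (by omega) _ _ h1 hk
      exact ⟨m, by omega, seq_EE hdeg hs he⟩

theorem seq_op {H G : SimpleGraph ℕ} {n : ℕ} (h : SeqN FF n H G)
    (hc : ∃ c : ℕ → Bool, ∀ x y, H.Adj x y → c x ≠ c y) :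
    SeqN OpFwd n H G ∧ ∃ c : ℕ → Bool, ∀ x y, G.Adj x y → c x ≠ c y := by
  induction h with
  | refl => exact ⟨SeqN.refl _, hc⟩
  | tail _ h ih =>
    obtain ⟨c, hc'⟩ := ff_col h (ih hc).2
    exact ⟨(ih hc).1.tail (ff_op c hc' h), c, hc'⟩

theorem stmt_1 (H H' : SimpleGraph ℕ) (t : ℕ) (hfin : H.edgeSet.Finite)
    (hbip : H.Colorable 2)
    (hdeg : ∀ v ∈ H.support, 3 ≤ (H.neighborSet v).ncard)
    (h : SeqN OpAny t H H') :
    ∃ s ≤ t, SeqN OpFwd s H H' := by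
  have hd : ∀ v, Low H v → ∀ y, ¬ H.Adj v y := by
    rintro v ⟨a, b, hl⟩ y hy
    have h3 := hdeg v ⟨y, hy⟩
    have : (H.neighborSet v).ncard ≤ ({a, b} : Set ℕ).ncard :=
      Set.ncard_le_ncard (fun x hx => hl x hx) (Set.toFinite _)
    have := (Set.ncard_insert_le a {b}).trans_eq (by rw [Set.ncard_singleton])
    omega
  have hc : ∃ c : ℕ → Bool, ∀ x y, H.Adj x y → c x ≠ c y := by
    obtain ⟨c⟩ := hbip
    refine ⟨fun x => decide (c x = 0), fun x y hxy => ?_⟩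
    have := c.valid hxy
    simp only [ne_eq, decide_eq_decide]
    omega
  suffices ∃ s ≤ t, SeqN FF s H H' by
    obtain ⟨s, hs, h⟩ := this
    exact ⟨s, hs, (seq_op h hc).1⟩
  clear hc hbip hfin hdeg
  induction h with
  | refl => exact ⟨0, le_rfl, SeqN.refl _⟩
  | tail _ hop ih =>
    obtain ⟨s, hs, hq⟩ := ih hd
    rcases hop with hop | hop
    · exact ⟨s + 1, by omega, hq.tail (op_ff hop)⟩
    · obtain ⟨m, hm, hq'⟩ := back hd s _ _ hq (op_ff hop)
      exact ⟨m, by omega, hq'⟩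
end
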